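/- Let 0 < ε ≤ 1/600 and r₀ > 0. Then every (ε, r₀)-Reifenberg-flat domain Ω ⊆ ℝ^N satisfies the (1/450, r₀/7)-Jones-flatness condition: for any x, y ∈ Ω with d(x,y) ≤ r₀/7 there is a rectifiable curve γ ⊆ Ω connecting x and y such that H¹(γ) ≤ 450·d(x,y) and d(z, ℝ^N∖Ω) ≥ (1/450)·d(z,x)d(z,y)/d(x,y) for every z ∈ γ. -/

import Mathlib

open Metric MeasureTheory Set Filter
open scoped ENNReal InnerProductSpace NNReal Topology

noncomputable section

/-- An `(ε, r₀)`-Reifenberg-flat domain in `ℝ^N`: a nonempty open set such that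
(i) at every boundary point and every scale `r ≤ r₀` the boundary is `ε r`-close in
Hausdorff distance to a hyperplane through the point, and (ii) at scale `r₀` the two
connected components of the complement of the `2 ε r₀`-neighborhood of the hyperplane
inside the ball lie in `Ω` and in `Ωᶜ` respectively. -/
def IsReifenbergFlat {N : ℕ} (ε r₀ : ℝ) (Ω : Set (EuclideanSpace ℝ (Fin N))) : Prop :=
  Ω.Nonempty ∧ IsOpen Ω ∧
    (∀ x ∈ frontier Ω, ∀ r : ℝ, 0 < r → r ≤ r₀ →
      ∃ ν : EuclideanSpace ℝ (Fin N), ‖ν‖ = 1 ∧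
        Metric.hausdorffDist (frontier Ω ∩ Metric.ball x r)
          ({y | ⟪ν, y - x⟫_ℝ = 0} ∩ Metric.ball x r) ≤ ε * r) ∧
    (∀ x ∈ frontier Ω,
      ∃ ν : EuclideanSpace ℝ (Fin N), ‖ν‖ = 1 ∧
        Metric.hausdorffDist (frontier Ω ∩ Metric.ball x r₀)
          ({y | ⟪ν, y - x⟫_ℝ = 0} ∩ Metric.ball x r₀) ≤ ε * r₀ ∧
        {y | 2 * ε * r₀ ≤ ⟪ν, y - x⟫_ℝ} ∩ Metric.ball x r₀ ⊆ Ω ∧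
        {y | ⟪ν, y - x⟫_ℝ ≤ -(2 * ε * r₀)} ∩ Metric.ball x r₀ ⊆ Ωᶜ)

/-- Existence of a path from `x` to `y` inside `G` of length at most `L`. -/
def JoinedLen {N : ℕ} (x y : EuclideanSpace ℝ (Fin N)) (G : Set (EuclideanSpace ℝ (Fin N)))
    (L : ℝ) : Prop :=
  ∃ γ : Path x y, range γ ⊆ G ∧ μH[1] (range γ) ≤ ENNReal.ofReal L

lemma JoinedLen.trans {N : ℕ} {x y z : EuclideanSpace ℝ (Fin N)}
    {G : Set (EuclideanSpace ℝ (Fin N))} {L M : ℝ} (hL : 0 ≤ L) (hM : 0 ≤ M)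
    (h₁ : JoinedLen x y G L) (h₂ : JoinedLen y z G M) : JoinedLen x z G (L + M) := by
  obtain ⟨γ, h, h'⟩ := h₁
  obtain ⟨η, k, k'⟩ := h₂
  refine ⟨γ.trans η, ?_, ?_⟩
  · rw [Path.trans_range]; exact union_subset h k
  · rw [Path.trans_range, ENNReal.ofReal_add hL hM]
    exact (measure_union_le _ _).trans (add_le_add h' k')

lemma JoinedLen.symm {N : ℕ} {x y : EuclideanSpace ℝ (Fin N)}
    {G : Set (EuclideanSpace ℝ (Fin N))} {L : ℝ}
    (h₁ : JoinedLen x y G L) : JoinedLen y x G L := by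
  obtain ⟨γ, h, h'⟩ := h₁
  exact ⟨γ.symm, by rwa [Path.symm_range], by rwa [Path.symm_range]⟩

lemma JoinedLen.mono {N : ℕ} {x y : EuclideanSpace ℝ (Fin N)}
    {G G' : Set (EuclideanSpace ℝ (Fin N))} {L L' : ℝ}
    (h₁ : JoinedLen x y G L) (hG : G ⊆ G') (hL : L ≤ L') : JoinedLen x y G' L' := by
  obtain ⟨γ, h, h'⟩ := h₁
  exact ⟨γ, h.trans hG, h'.trans (ENNReal.ofReal_le_ofReal hL)⟩

lemma JoinedLen.seg {N : ℕ} {x y : EuclideanSpace ℝ (Fin N)}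
    {G : Set (EuclideanSpace ℝ (Fin N))} {L : ℝ}
    (hG : segment ℝ x y ⊆ G) (hL : dist x y ≤ L) : JoinedLen x y G L := by
  have hr : range (Path.segment x y) = segment ℝ x y := by
    exact Path.range_segment x y
  refine ⟨Path.segment x y, ?_, ?_⟩
  · rw [hr]; exact hG
  · rw [hr, hausdorffMeasure_segment, edist_dist]
    exact ENNReal.ofReal_le_ofReal hL

/-- Separation of the two sides at scale `r` around `p`. -/
def ScaleSep {N : ℕ} (ε : ℝ) (Ω : Set (EuclideanSpace ℝ (Fin N))) (p : EuclideanSpace ℝ (Fin N))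
    (r : ℝ) (ν : EuclideanSpace ℝ (Fin N)) : Prop :=
  ‖ν‖ = 1 ∧ (∀ y, 2 * ε * r ≤ ⟪ν, y - p⟫_ℝ → dist y p < r → y ∈ Ω) ∧
    (∀ y, ⟪ν, y - p⟫_ℝ ≤ -(2 * ε * r) → dist y p < r → y ∉ Ω)

lemma inner_le_dist {N : ℕ} {ν : EuclideanSpace ℝ (Fin N)} (hν : ‖ν‖ = 1)
    (a b p : EuclideanSpace ℝ (Fin N)) :
    ⟪ν, a - p⟫_ℝ ≤ ⟪ν, b - p⟫_ℝ + dist a b := by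
  have h : ⟪ν, a - b⟫_ℝ ≤ ‖ν‖ * ‖a - b‖ := real_inner_le_norm _ _
  have e : a - p = (b - p) + (a - b) := by abel
  rw [e, inner_add_right, dist_eq_norm]
  rw [hν, one_mul] at h
  linarith

lemma inner_smul_shift {N : ℕ} {ν : EuclideanSpace ℝ (Fin N)} (hν : ‖ν‖ = 1)
    (a p : EuclideanSpace ℝ (Fin N)) (t : ℝ) :
    ⟪ν, (a + t • ν) - p⟫_ℝ = ⟪ν, a - p⟫_ℝ + t := by
  have e : (a + t • ν) - p = (a - p) + t • ν := by abel
  rw [e, inner_add_right, inner_smul_right, real_inner_self_eq_norm_sq, hν]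
  ring

lemma dist_shift {N : ℕ} {ν : EuclideanSpace ℝ (Fin N)} (hν : ‖ν‖ = 1)
    (a : EuclideanSpace ℝ (Fin N)) (t : ℝ) : dist (a + t • ν) a = |t| := by
  simp [dist_eq_norm, norm_smul, hν]

/-- Deep points are high above the plane. -/
lemma ScaleSep.height {N : ℕ} {ε r h : ℝ} (hε : 0 < ε) {Ω : Set (EuclideanSpace ℝ (Fin N))}
    {p ν A : EuclideanSpace ℝ (Fin N)} (hr : 0 < r) (hS : ScaleSep ε Ω p r ν) (hh : 0 < h)
    (hA : ball A h ⊆ Ω) (hd : dist A p + h ≤ r) : h - 2 * ε * r ≤ ⟪ν, A - p⟫_ℝ := by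
  obtain ⟨hν, -, h2⟩ := hS
  by_contra! hc
  rcases le_or_gt (⟪ν, A - p⟫_ℝ) (-(2 * ε * r)) with h0 | h0
  · exact h2 A h0 (by linarith) (hA (mem_ball_self hh))
  · set t := ⟪ν, A - p⟫_ℝ + 2 * ε * r with ht
    have hd' := dist_shift hν A (-t)
    rw [abs_neg, abs_of_pos (by linarith)] at hd'
    refine h2 (A + (-t) • ν) ?_ ?_ (hA ?_)
    · rw [inner_smul_shift hν]; linarith
    · have := dist_triangle (A + (-t) • ν) A p
      linarith
    · rw [mem_ball, hd']; linarith

/-- Segments between deep points remain deep. -/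
lemma ScaleSep.connect {N : ℕ} {ε r h : ℝ} (hε : 0 < ε) {Ω : Set (EuclideanSpace ℝ (Fin N))}
    {p ν A B : EuclideanSpace ℝ (Fin N)} (hr : 0 < r) (hS : ScaleSep ε Ω p r ν) (hh : 0 < h)
    (hA : ball A h ⊆ Ω) (hdA : dist A p + h ≤ r)
    (hB : ball B h ⊆ Ω) (hdB : dist B p + h ≤ r) :
    ∀ z ∈ segment ℝ A B, ball z (h - 4 * ε * r) ⊆ Ω := by
  intro z hz w hw
  have hεr : 0 < ε * r := mul_pos hε hr
  have a1 := hS.height hε hr hh hA hdA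
  have a2 := hS.height hε hr hh hB hdB
  have hz1 : dist z p ≤ r - h := by
    have : segment ℝ A B ⊆ closedBall p (r - h) :=
      (convex_closedBall p (r - h)).segment_subset (by rw [mem_closedBall]; linarith)
        (by rw [mem_closedBall]; linarith)
    exact this hz
  have hz2 : h - 2 * ε * r ≤ ⟪ν, z - p⟫_ℝ := by
    obtain ⟨a, b, ha, hb, hab, rfl⟩ := hz
    have e : a • A + b • B - p = a • (A - p) + b • (B - p) := by
      have : p = a • p + b • p := by rw [← add_smul, hab, one_smul]
      rw [smul_sub, smul_sub]
      nth_rw 1 [this]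
      abel
    rw [e, inner_add_right, inner_smul_right, inner_smul_right]
    have hb' : b = 1 - a := by linarith
    nlinarith [mul_le_mul_of_nonneg_left a1 ha, mul_le_mul_of_nonneg_left a2 hb]
  rw [mem_ball] at hw
  have h3 := inner_le_dist hS.1 z w p
  rw [dist_comm z w] at h3
  have h4 := dist_triangle w z p
  exact hS.2.1 w (by linarith) (by linarith)

/-- The corkscrew point. -/
lemma ScaleSep.top {N : ℕ} {ε r : ℝ} (hε : 0 < ε) {Ω : Set (EuclideanSpace ℝ (Fin N))}
    {p ν : EuclideanSpace ℝ (Fin N)} (hr : 0 < r) (hS : ScaleSep ε Ω p r ν) :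
    ball (p + (r / 2) • ν) (r / 2 - 2 * ε * r) ⊆ Ω := by
  intro w hw
  have hεr : 0 < ε * r := mul_pos hε hr
  rw [mem_ball] at hw
  have h1 := inner_le_dist hS.1 (p + (r / 2) • ν) w p
  rw [inner_smul_shift hS.1, sub_self, inner_zero_right, dist_comm] at h1
  have h2 := dist_triangle w (p + (r / 2) • ν) p
  rw [dist_shift hS.1, abs_of_pos (by linarith)] at h2
  exact hS.2.1 w (by linarith) (by linarith)

lemma subset_of_disj_frontier {N : ℕ} {Ω U : Set (EuclideanSpace ℝ (Fin N))}
    (hU : Convex ℝ U) (hf : ∀ y ∈ U, y ∉ frontier Ω) {a b : EuclideanSpace ℝ (Fin N)}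
    (ha : a ∈ U) (haΩ : a ∈ Ω) (hb : b ∈ U) : b ∈ Ω := by
  by_contra hbΩ
  have hcl : ∀ z ∈ U, z ∈ closure Ω → z ∈ interior Ω := by
    intro z hz hzc
    by_contra hzi
    exact hf z hz ⟨hzc, hzi⟩
  have hbc : b ∉ closure Ω := fun h => hbΩ (interior_subset (hcl b hb h))
  obtain ⟨c, -, hc1, hc2⟩ := hU.isPreconnected (interior Ω) (closure Ω)ᶜ isOpen_interior
    isClosed_closure.isOpen_compl
    (fun z hz => by
      by_cases h : z ∈ closure Ω
      · exact Or.inl (hcl z hz h)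
      · exact Or.inr h)
    ⟨a, ha, hcl a ha (subset_closure haΩ)⟩ ⟨b, hb, hbc⟩
  exact hc2 (subset_closure (interior_subset hc1))

/-- Separation goes down one scale. -/
lemma ScaleSep.down {N : ℕ} {ε r r' : ℝ} (hε : 0 < ε) (hε' : ε ≤ 1 / 600)
    {Ω : Set (EuclideanSpace ℝ (Fin N))} (hΩ : IsOpen Ω)
    {p ν : EuclideanSpace ℝ (Fin N)} (hp : p ∈ frontier Ω) (hr : 0 < r) (hS : ScaleSep ε Ω p r ν)
    (h1 : r / 2 ≤ r') (h2 : r' ≤ r)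
    (hex : ∃ μ : EuclideanSpace ℝ (Fin N), ‖μ‖ = 1 ∧
        Metric.hausdorffDist (frontier Ω ∩ Metric.ball p r')
          ({y | ⟪μ, y - p⟫_ℝ = 0} ∩ Metric.ball p r') ≤ ε * r') :
    ∃ μ, ScaleSep ε Ω p r' μ := by
  have hr' : 0 < r' := by linarith
  have hεr' : 0 < ε * r' := mul_pos hε hr'
  have hεr : 0 < ε * r := mul_pos hε hr
  have hεrr : ε * r ≤ 2 * (ε * r') := by nlinarith
  have hεs : ε * r' ≤ r' / 600 := by nlinarith
  obtain ⟨hν, hS1, hS2⟩ := hS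
  obtain ⟨μ₀, hμ₀, hH⟩ := hex
  have hfin : Metric.hausdorffEDist (frontier Ω ∩ Metric.ball p r')
          ({y | ⟪μ₀, y - p⟫_ℝ = 0} ∩ Metric.ball p r') ≠ ⊤ := by
    apply Metric.hausdorffEDist_ne_top_of_nonempty_of_bounded
    · exact ⟨p, hp, mem_ball_self hr'⟩
    · exact ⟨p, by simp, mem_ball_self hr'⟩
    · exact isBounded_ball.subset inter_subset_right
    · exact isBounded_ball.subset inter_subset_right
  have hHlt : Metric.hausdorffDist (frontier Ω ∩ Metric.ball p r')
          ({y | ⟪μ₀, y - p⟫_ℝ = 0} ∩ Metric.ball p r') < 2 * ε * r' := by linarith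
  -- boundary close to the plane
  have hslab₀ : ∀ b ∈ frontier Ω, dist b p < r' → |⟪μ₀, b - p⟫_ℝ| < 2 * ε * r' := by
    intro b hb hbp
    obtain ⟨y, ⟨hy, -⟩, hy'⟩ := Metric.exists_dist_lt_of_hausdorffDist_lt
      (show b ∈ frontier Ω ∩ ball p r' from ⟨hb, hbp⟩) hHlt hfin
    have hy0 : ⟪μ₀, y - p⟫_ℝ = 0 := hy
    have i1 := inner_le_dist hμ₀ b y p
    have i2 := inner_le_dist hμ₀ y b p
    rw [dist_comm y b] at i2
    rw [abs_lt]; constructor <;> linarith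
  -- plane close to the boundary
  have hinner : (49 : ℝ) / 50 ≤ ⟪ν, μ₀⟫_ℝ ^ 2 := by
    set c := ⟪ν, μ₀⟫_ℝ with hc
    set w := ν - c • μ₀ with hw
    have e1 : ⟪μ₀, w⟫_ℝ = 0 := by
      rw [hw, inner_sub_right, inner_smul_right, real_inner_self_eq_norm_sq, hμ₀,
        real_inner_comm, ← hc]; ring
    have e2 : ⟪ν, w⟫_ℝ = 1 - c ^ 2 := by
      rw [hw, inner_sub_right, inner_smul_right, real_inner_self_eq_norm_sq, hν, ← hc]; ring
    have e3 : ‖w‖ ^ 2 = 1 - c ^ 2 := by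
      rw [← real_inner_self_eq_norm_sq]
      nth_rw 1 [hw]
      rw [inner_sub_left, inner_smul_left, e1, e2]; simp
    have e4 : ‖w‖ ≤ 1 := by nlinarith [norm_nonneg w, sq_nonneg c]
    set y := p + (r' / 2) • w with hy
    have hyp : y - p = (r' / 2) • w := by rw [hy]; abel
    have hyd : dist y p < r' := by
      rw [dist_eq_norm, hyp, norm_smul, Real.norm_of_nonneg (by linarith)]
      nlinarith
    have hyP : y ∈ {y | ⟪μ₀, y - p⟫_ℝ = 0} ∩ ball p r' := by
      refine ⟨?_, hyd⟩
      change ⟪μ₀, y - p⟫_ℝ = 0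
      rw [hyp, inner_smul_right, e1, mul_zero]
    obtain ⟨b, ⟨hb, hbp⟩, hby⟩ := Metric.exists_dist_lt_of_hausdorffDist_lt' hyP hHlt hfin
    have hbν : ⟪ν, b - p⟫_ℝ < 2 * ε * r := by
      by_contra! hcon
      have : b ∈ Ω := hS1 b hcon (lt_of_lt_of_le hbp h2)
      rw [hΩ.frontier_eq] at hb
      exact hb.2 this
    have i1 := inner_le_dist hν y b p
    rw [hyp, inner_smul_right, e2, dist_comm] at i1
    have : r' / 2 * (1 - c ^ 2) ≤ 6 * (r' / 600) := by linarith
    nlinarith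
  -- choose the sign
  obtain ⟨μ, hμ, hc, hslab⟩ : ∃ μ : EuclideanSpace ℝ (Fin N), ‖μ‖ = 1 ∧ (9 : ℝ) / 10 ≤ ⟪ν, μ⟫_ℝ ∧
      ∀ b ∈ frontier Ω, dist b p < r' → |⟪μ, b - p⟫_ℝ| < 2 * ε * r' := by
    rcases le_or_gt 0 (⟪ν, μ₀⟫_ℝ) with h0 | h0
    · exact ⟨μ₀, hμ₀, by nlinarith, hslab₀⟩
    · refine ⟨-μ₀, by rw [norm_neg, hμ₀], ?_, ?_⟩
      · rw [inner_neg_right]; nlinarith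
      · intro b hb hbp
        rw [inner_neg_left, abs_neg]; exact hslab₀ b hb hbp
  have hc' : (9 : ℝ) / 10 ≤ ⟪μ, ν⟫_ℝ := by rw [real_inner_comm]; exact hc
  have hlin : IsLinearMap ℝ (fun y : EuclideanSpace ℝ (Fin N) => ⟪μ, y⟫_ℝ) :=
    ⟨fun a b => inner_add_right _ _ _, fun a b => by simp [inner_smul_right]⟩
  refine ⟨μ, hμ, ?_, ?_⟩
  · intro y hy hyp
    have hconv : Convex ℝ ({y | 2 * ε * r' + ⟪μ, p⟫_ℝ ≤ ⟪μ, y⟫_ℝ} ∩ ball p r') :=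
      (convex_halfSpace_ge hlin _).inter (convex_ball p r')
    refine subset_of_disj_frontier (Ω := Ω) (a := p + (r' / 2) • ν) hconv ?_ ⟨?_, ?_⟩ ?_ ⟨?_, hyp⟩
    · rintro z ⟨hz, hzp⟩ hzf
      have := (abs_lt.1 (hslab z hzf hzp)).2
      rw [inner_sub_right] at this
      have hz' : 2 * ε * r' + ⟪μ, p⟫_ℝ ≤ ⟪μ, z⟫_ℝ := hz
      linarith
    · change 2 * ε * r' + ⟪μ, p⟫_ℝ ≤ ⟪μ, p + (r' / 2) • ν⟫_ℝ
      rw [inner_add_right, inner_smul_right]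
      nlinarith
    · rw [mem_ball, dist_shift hν, abs_of_pos (by linarith)]; linarith
    · apply hS1
      · rw [inner_smul_shift hν, sub_self, inner_zero_right]; linarith
      · rw [dist_shift hν, abs_of_pos (by linarith)]; linarith
    · change 2 * ε * r' + ⟪μ, p⟫_ℝ ≤ ⟪μ, y⟫_ℝ
      rw [inner_sub_right] at hy; linarith
  · intro y hy hyp hyΩ
    have hconv : Convex ℝ ({y | ⟪μ, y⟫_ℝ ≤ -(2 * ε * r') + ⟪μ, p⟫_ℝ} ∩ ball p r') :=
      (convex_halfSpace_le hlin _).inter (convex_ball p r')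
    have hbad : p + (-(r' / 2)) • ν ∉ Ω := by
      apply hS2
      · rw [inner_smul_shift hν, sub_self, inner_zero_right]; linarith
      · rw [dist_shift hν, abs_neg, abs_of_pos (by linarith)]; linarith
    refine hbad (subset_of_disj_frontier (Ω := Ω) (a := y) hconv ?_ ⟨?_, hyp⟩ hyΩ ⟨?_, ?_⟩)
    · rintro z ⟨hz, hzp⟩ hzf
      have := (abs_lt.1 (hslab z hzf hzp)).1
      rw [inner_sub_right] at this
      have hz' : ⟪μ, z⟫_ℝ ≤ -(2 * ε * r') + ⟪μ, p⟫_ℝ := hz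
      linarith
    · change ⟪μ, y⟫_ℝ ≤ -(2 * ε * r') + ⟪μ, p⟫_ℝ
      rw [inner_sub_right] at hy; linarith
    · change ⟪μ, p + (-(r' / 2)) • ν⟫_ℝ ≤ -(2 * ε * r') + ⟪μ, p⟫_ℝ
      rw [inner_add_right, inner_smul_right]
      nlinarith
    · rw [mem_ball, dist_shift hν, abs_neg, abs_of_pos (by linarith)]; linarith

/-- Separation at all scales. -/
lemma sep_all {N : ℕ} {ε r₀ : ℝ} (hε : 0 < ε) (hε' : ε ≤ 1 / 600) (hr₀ : 0 < r₀)
    {Ω : Set (EuclideanSpace ℝ (Fin N))} (hΩ : IsReifenbergFlat ε r₀ Ω)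
    {p : EuclideanSpace ℝ (Fin N)} (hp : p ∈ frontier Ω) {r : ℝ} (hr : 0 < r) (hrr : r ≤ r₀) :
    ∃ ν, ScaleSep ε Ω p r ν := by
  obtain ⟨-, hO, hi, hii⟩ := hΩ
  have key : ∀ n : ℕ, ∀ r : ℝ, 0 < r → r ≤ r₀ → r₀ ≤ 2 ^ n * r → ∃ ν, ScaleSep ε Ω p r ν := by
    intro n
    induction n with
    | zero =>
      intro r hr h1 h2
      obtain rfl : r = r₀ := by rw [pow_zero, one_mul] at h2; linarith
      obtain ⟨ν, hν, -, h3, h4⟩ := hii p hp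
      exact ⟨ν, hν, fun y hy hy' => h3 ⟨hy, hy'⟩, fun y hy hy' => h4 ⟨hy, hy'⟩⟩
    | succ n ih =>
      intro r hr h1 h2
      rw [pow_succ] at h2
      have hpow : (1 : ℝ) ≤ 2 ^ n := one_le_pow₀ (by norm_num)
      obtain ⟨ν, hν⟩ := ih (min r₀ (2 * r)) (lt_min hr₀ (by linarith)) (min_le_left _ _) (by
        rcases min_choice r₀ (2 * r) with h | h <;> rw [h] <;> nlinarith)
      exact hν.down hε hε' hO hp (lt_min hr₀ (by linarith))
        (by linarith [min_le_right r₀ (2 * r)]) (le_min h1 (by linarith)) (hi p hp r hr h1)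
  obtain ⟨n, hn⟩ := pow_unbounded_of_one_lt (r₀ / r) (show (1 : ℝ) < 2 by norm_num)
  refine key n r hr hrr ?_
  rw [div_lt_iff₀ hr] at hn
  exact hn.le

/-- Climbing from a point to a corkscrew point. -/
lemma climb {N : ℕ} {ε r₀ : ℝ} (hε : 0 < ε) (hε' : ε ≤ 1 / 600)
    {Ω : Set (EuclideanSpace ℝ (Fin N))}
    {p x : EuclideanSpace ℝ (Fin N)}
    (hsep : ∀ r : ℝ, 0 < r → r ≤ r₀ → ∃ ν, ScaleSep ε Ω p r ν)
    (hball : ball x (dist x p) ⊆ Ω) (hpos : 0 < dist x p) :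
    ∀ n : ℕ, ∀ r : ℝ, 0 < r → r ≤ r₀ → dist x p ≤ r / 2 → r ≤ 2 ^ n * (4 * dist x p) →
      ∃ A, dist A p ≤ r / 2 ∧ ball A (r / 2 - 2 * ε * r) ⊆ Ω ∧
        JoinedLen x A {z | z ∈ Ω ∧ ball z (6 / 25 * dist z x) ⊆ Ω ∧ dist z x ≤ r} (3 / 2 * r) := by
  have base : ∀ r : ℝ, 0 < r → r ≤ r₀ → dist x p ≤ r / 2 →
      ∀ B, ball B (r / 4 - ε * r) ⊆ Ω → dist B p ≤ r / 2 → ∃ A, dist A p ≤ r / 2 ∧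
        ball A (r / 2 - 2 * ε * r) ⊆ Ω ∧ (∀ z ∈ segment ℝ B A,
          z ∈ Ω ∧ ball z (6 / 25 * dist z x) ⊆ Ω ∧ dist z x ≤ r) ∧
        dist A p = r / 2 := by
    intro r hr hrr hxr B hB hBp
    have hεr : 0 < ε * r := mul_pos hε hr
    have hεs : ε * r ≤ r / 600 := by nlinarith
    obtain ⟨ν, hν⟩ := hsep r hr hrr
    have htop := hν.top hε hr
    have hd := dist_shift hν.1 p (r / 2)
    rw [abs_of_pos (by linarith)] at hd
    refine ⟨p + (r / 2) • ν, hd.le, htop, ?_, hd⟩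
    intro z hz
    have hb := hν.connect hε hr (h := r / 4 - ε * r) (by linarith) hB (by linarith)
      ((ball_subset_ball (by linarith)).trans htop) (by linarith) z hz
    have hzp : dist z p ≤ r / 2 := by
      have : segment ℝ B (p + (r / 2) • ν) ⊆ closedBall p (r / 2) :=
        (convex_closedBall p (r / 2)).segment_subset hBp hd.le
      exact this hz
    have hzx : dist z x ≤ r := by
      have := dist_triangle z p x
      rw [dist_comm p x] at this
      linarith
    refine ⟨hb (mem_ball_self (by linarith)), (ball_subset_ball ?_).trans hb, hzx⟩
    linarith
  have direct : ∀ r : ℝ, 0 < r → r ≤ r₀ → dist x p ≤ r / 2 → r / 4 ≤ dist x p →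
      ∃ A, dist A p ≤ r / 2 ∧ ball A (r / 2 - 2 * ε * r) ⊆ Ω ∧
        JoinedLen x A {z | z ∈ Ω ∧ ball z (6 / 25 * dist z x) ⊆ Ω ∧ dist z x ≤ r} (3 / 2 * r) := by
    intro r hr hrr hxr hxr'
    have hεr : 0 < ε * r := mul_pos hε hr
    obtain ⟨A, h1, h2, h3, -⟩ := base r hr hrr hxr x
      ((ball_subset_ball (by linarith)).trans hball) hxr
    refine ⟨A, h1, h2, JoinedLen.seg h3 ?_⟩
    have := dist_triangle x p A
    rw [dist_comm p A] at this
    linarith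
  intro n
  induction n with
  | zero =>
    intro r hr hrr hxr h
    rw [pow_zero, one_mul] at h
    exact direct r hr hrr hxr (by linarith)
  | succ n ih =>
    intro r hr hrr hxr h
    rcases le_or_gt (r / 4) (dist x p) with h4 | h4
    · exact direct r hr hrr hxr h4
    · rw [pow_succ] at h
      obtain ⟨B, b1, b2, b3⟩ := ih (r / 2) (by linarith) (by linarith) (by linarith) (by linarith)
      obtain ⟨A, h1, h2, h3, -⟩ := base r hr hrr hxr B
        ((ball_subset_ball (by linarith)).trans b2) (by linarith)
      refine ⟨A, h1, h2, ?_⟩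
      have b4 := b3.mono (G' := {z | z ∈ Ω ∧ ball z (6 / 25 * dist z x) ⊆ Ω ∧ dist z x ≤ r})
        (L' := 3 / 4 * r) (fun z hz => ⟨hz.1, hz.2.1, by linarith [hz.2.2]⟩) (by linarith)
      have hBA : dist B A ≤ 3 / 4 * r := by
        have := dist_triangle B p A
        rw [dist_comm p A] at this
        linarith
      exact (b4.trans (by linarith) (by linarith) (JoinedLen.seg h3 hBA)).mono subset_rfl
        (by linarith)

/-- Nearest boundary point. -/
lemma exists_nearest {N : ℕ} {Ω : Set (EuclideanSpace ℝ (Fin N))} (hO : IsOpen Ω)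
    {x : EuclideanSpace ℝ (Fin N)} (hx : x ∈ Ω) {d : ℝ} (h : ¬ ball x d ⊆ Ω) :
    ∃ p ∈ frontier Ω, 0 < dist x p ∧ dist x p < d ∧ ball x (dist x p) ⊆ Ω := by
  obtain ⟨w, hw, hwΩ⟩ := not_subset.1 h
  obtain ⟨p, hp, hpd⟩ := hO.isClosed_compl.exists_infDist_eq_dist ⟨w, hwΩ⟩ x
  have hne : x ≠ p := fun e => hp (e ▸ hx)
  have hpos : 0 < dist x p := dist_pos.2 hne
  have hsub : ball x (dist x p) ⊆ Ω := by
    intro z hz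
    by_contra hzΩ
    have := infDist_le_dist_of_mem (x := x) (show z ∈ Ωᶜ from hzΩ)
    rw [mem_ball, dist_comm] at hz
    linarith
  refine ⟨p, ?_, hpos, ?_, hsub⟩
  · rw [hO.frontier_eq]
    refine ⟨closure_mono hsub ?_, hp⟩
    rw [closure_ball x hpos.ne', mem_closedBall, dist_comm]
  · have := infDist_le_dist_of_mem (x := x) (show w ∈ Ωᶜ from hwΩ)
    rw [mem_ball, dist_comm] at hw
    linarith

/-- Climbing to scale `2 d`. -/
lemma climb_top {N : ℕ} {ε r₀ : ℝ} (hε : 0 < ε) (hε' : ε ≤ 1 / 600) (hr₀ : 0 < r₀)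
    {Ω : Set (EuclideanSpace ℝ (Fin N))} (hΩ : IsReifenbergFlat ε r₀ Ω)
    {x : EuclideanSpace ℝ (Fin N)} (hx : x ∈ Ω) {d : ℝ} (hd : 0 < d) (hdr : d ≤ r₀ / 7)
    (h : ¬ ball x d ⊆ Ω) :
    ∃ p ∈ frontier Ω, dist x p < d ∧ ∃ A, dist A p ≤ d ∧ ball A (d - 4 * ε * d) ⊆ Ω ∧
        JoinedLen x A {z | z ∈ Ω ∧ ball z (6 / 25 * dist z x) ⊆ Ω ∧ dist z x ≤ 2 * d}
          (3 * d) := by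
  obtain ⟨p, hp, hpos, hlt, hball⟩ := exists_nearest hΩ.2.1 hx h
  obtain ⟨n, hn⟩ := pow_unbounded_of_one_lt ((2 * d) / (4 * dist x p))
    (show (1 : ℝ) < 2 by norm_num)
  rw [div_lt_iff₀ (by linarith)] at hn
  obtain ⟨A, h1, h2, h3⟩ := climb hε hε' (r₀ := r₀)
    (fun r hr hrr => sep_all hε hε' hr₀ hΩ hp hr hrr) hball hpos n (2 * d) (by linarith)
    (by linarith) (by linarith) hn.le
  exact ⟨p, hp, hlt, A, by linarith, (ball_subset_ball (by linarith)).trans h2,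
    h3.mono subset_rfl (by linarith)⟩

/-- The main construction. -/
lemma main_joined {N : ℕ} {ε r₀ : ℝ} (hε : 0 < ε) (hε' : ε ≤ 1 / 600) (hr₀ : 0 < r₀)
    {Ω : Set (EuclideanSpace ℝ (Fin N))} (hΩ : IsReifenbergFlat ε r₀ Ω)
    {x y : EuclideanSpace ℝ (Fin N)} (hx : x ∈ Ω) (hy : y ∈ Ω) (hne : x ≠ y)
    (hdr : dist x y ≤ r₀ / 7) :
    JoinedLen x y {z | z ∈ Ω ∧ ball z ((1 / 450) * (dist z x * dist z y / dist x y)) ⊆ Ω}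
      (450 * dist x y) := by
  have hd : 0 < dist x y := dist_pos.2 hne
  -- a convenient bound
  have hmul : ∀ a b c : ℝ, a * b ≤ c * dist x y →
      (1 / 450 : ℝ) * (a * b / dist x y) ≤ c / 450 := by
    intro a b c hab
    have : a * b / dist x y ≤ c := by rw [div_le_iff₀ hd]; exact hab
    linarith
  -- the easy case
  have easy : ∀ u v : EuclideanSpace ℝ (Fin N), dist u v = dist x y → v ∈ Ω →
      ball u (dist u v) ⊆ Ω → ∀ z ∈ segment ℝ u v,
        z ∈ Ω ∧ ball z ((1 / 450) * (dist z u * dist z v / dist x y)) ⊆ Ω := by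
    intro u v huv hv hb z hz
    have hsum : dist u z + dist z v = dist u v := dist_add_dist_of_mem_segment hz
    rw [dist_comm u z] at hsum
    have hzu : 0 ≤ dist z u := dist_nonneg
    have hzv : 0 ≤ dist z v := dist_nonneg
    constructor
    · rcases eq_or_lt_of_le hzv with h0 | h0
      · rw [dist_eq_zero.1 h0.symm]; exact hv
      · exact hb (by rw [mem_ball]; linarith)
    · refine Subset.trans (ball_subset_ball' ?_) hb
      have := hmul (dist z u) (dist z v) (dist z v) (by nlinarith)
      linarith
  by_cases hbx : ball x (dist x y) ⊆ Ω
  · exact JoinedLen.seg (easy x y rfl hy hbx) (by linarith)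
  by_cases hby : ball y (dist x y) ⊆ Ω
  · refine JoinedLen.symm (JoinedLen.seg (fun z hz => ?_) (show dist y x ≤ _ by
      rw [dist_comm]; linarith))
    have := easy y x (dist_comm _ _) hx (by rwa [dist_comm]) z hz
    rwa [mul_comm (dist z y)] at this
  obtain ⟨p, hp, hxp, A, hA, hAb, hAJ⟩ := climb_top hε hε' hr₀ hΩ hx hd hdr hbx
  obtain ⟨q, hq, hyq, B, hB, hBb, hBJ⟩ := climb_top hε hε' hr₀ hΩ hy hd hdr hby
  set d := dist x y with hdd
  have hεd : 0 < ε * d := mul_pos hε hd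
  have hεs : ε * d ≤ d / 600 := by nlinarith
  have J1 : JoinedLen x A {z | z ∈ Ω ∧ ball z ((1 / 450) * (dist z x * dist z y / d)) ⊆ Ω}
      (3 * d) := by
    refine hAJ.mono (fun z hz => ⟨hz.1, (ball_subset_ball ?_).trans hz.2.1⟩) le_rfl
    have h0 : 0 ≤ dist z x := dist_nonneg
    have h1 : dist z y ≤ 3 * d := by linarith [dist_triangle z x y, hz.2.2]
    have := hmul (dist z x) (dist z y) (3 * dist z x) (by nlinarith)
    linarith
  have J2 : JoinedLen y B {z | z ∈ Ω ∧ ball z ((1 / 450) * (dist z x * dist z y / d)) ⊆ Ω}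
      (3 * d) := by
    refine hBJ.mono (fun z hz => ⟨hz.1, (ball_subset_ball ?_).trans hz.2.1⟩) le_rfl
    have h0 : 0 ≤ dist z y := dist_nonneg
    have h1 : dist z x ≤ 3 * d := by
      have := dist_triangle z y x
      rw [dist_comm y x] at this
      linarith [hz.2.2]
    have := hmul (dist z x) (dist z y) (3 * dist z y) (by nlinarith)
    linarith
  have hBp : dist B p ≤ 4 * d := by
    have t1 := dist_triangle B q p
    have t2 := dist_triangle q y p
    have t3 := dist_triangle y x p
    rw [dist_comm q y] at t2
    rw [dist_comm y x] at t3
    linarith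
  obtain ⟨ν, hν⟩ := sep_all hε hε' hr₀ hΩ hp (r := 5 * d) (by linarith) (by linarith)
  have J3 : JoinedLen A B {z | z ∈ Ω ∧ ball z ((1 / 450) * (dist z x * dist z y / d)) ⊆ Ω}
      (5 * d) := by
    refine JoinedLen.seg (fun z hz => ?_) ?_
    · have hb := hν.connect hε (by linarith) (h := d - 4 * ε * d) (by linarith) hAb
        (by linarith) hBb (by linarith) z hz
      have hzp : dist z p ≤ 4 * d := by
        have : segment ℝ A B ⊆ closedBall p (4 * d) :=
          (convex_closedBall p (4 * d)).segment_subset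
            (by rw [mem_closedBall]; linarith) hBp
        exact this hz
      have hzx : dist z x ≤ 5 * d := by
        have := dist_triangle z p x
        rw [dist_comm p x] at this
        linarith
      have hzy : dist z y ≤ 6 * d := by linarith [dist_triangle z x y]
      refine ⟨hb (mem_ball_self (by linarith)), (ball_subset_ball ?_).trans hb⟩
      have h0 : 0 ≤ dist z x := dist_nonneg
      have h0' : 0 ≤ dist z y := dist_nonneg
      have := hmul (dist z x) (dist z y) (30 * d) (by nlinarith)
      linarith
    · have := dist_triangle A p B
      rw [dist_comm p B] at this
      linarith
  exact ((J1.trans (by linarith) (by linarith) J3).trans (by linarith) (by linarith)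
    J2.symm).mono subset_rfl (by linarith)

/-- **Theorem (Reifenberg-flat implies Jones-flat).**
Any `(ε, r₀)`-Reifenberg-flat domain with `0 < ε ≤ 1/600` satisfies the
`(1/450, r₀/7)`-Jones-flatness condition: any two points `x, y ∈ Ω` with
`dist x y ≤ r₀ / 7` are joined by a rectifiable curve `γ ⊆ Ω` with
`H¹(γ) ≤ 450 * dist x y` and `dist (z, Ωᶜ) ≥ (1/450) * dist z x * dist z y / dist x y`
for every `z ∈ γ`. -/
theorem reifenberg_implies_jones {N : ℕ} {ε r₀ : ℝ}
    (hε : 0 < ε) (hε' : ε ≤ 1 / 600) (hr₀ : 0 < r₀)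
    {Ω : Set (EuclideanSpace ℝ (Fin N))} (hΩ : IsReifenbergFlat ε r₀ Ω) :
    ∀ x ∈ Ω, ∀ y ∈ Ω, dist x y ≤ r₀ / 7 →
      ∃ f : ℝ → EuclideanSpace ℝ (Fin N),
        ContinuousOn f (Set.Icc 0 1) ∧ f 0 = x ∧ f 1 = y ∧
        f '' Set.Icc 0 1 ⊆ Ω ∧
        μH[1] (f '' Set.Icc 0 1) ≤ ENNReal.ofReal (450 * dist x y) ∧
        ∀ z ∈ f '' Set.Icc 0 1,
          ENNReal.ofReal ((1 / 450) * (dist z x * dist z y / dist x y)) ≤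
            EMetric.infEdist z Ωᶜ := by
  intro x hx y hy hdr
  have key : JoinedLen x y {z | z ∈ Ω ∧
      ball z ((1 / 450) * (dist z x * dist z y / dist x y)) ⊆ Ω} (450 * dist x y) := by
    by_cases hne : x = y
    · subst hne
      refine JoinedLen.seg (fun z hz => ?_) (by simp)
      rw [segment_same] at hz
      obtain rfl : z = x := hz
      exact ⟨hx, by simp⟩
    · exact main_joined hε hε' hr₀ hΩ hx hy hne hdr
  obtain ⟨γ, hγ, hlen⟩ := key
  have him : γ.extend '' Set.Icc 0 1 = range γ := by
    exact Path.image_extend_of_subset γ subset_rfl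
  refine ⟨γ.extend, γ.continuous_extend.continuousOn, γ.extend_zero, γ.extend_one, ?_, ?_, ?_⟩
  · rw [him]; exact fun z hz => (hγ hz).1
  · rw [him]; exact hlen
  · rw [him]
    intro z hz
    have hb := (hγ hz).2
    refine Metric.le_infEDist.2 (fun w hw => ?_)
    rw [edist_dist]
    refine ENNReal.ofReal_le_ofReal ?_
    by_contra! hcon
    exact hw (hb (by rw [mem_ball, dist_comm]; exact hcon))
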